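/- Let D = (P,𝓑) be a symmetric 2-(v,k,λ) design and let G be a flag-transitive automorphism group of D whose point stabilizers G_x have prime order p. Then G acts primitively on P, |G| is odd, and G is a Frobenius permutation group on P (transitive, not regular, and every non-identity element fixes at most one point). -/

import Mathlib

/-!
Counting gives `r = k`, `k (k - 1) = lam (v - 1)` and `lam < k`. Flag-transitivity makes each point
stabilizer transitive on the `k > 2` blocks through its point, so `k ∣ p` and `k = p`. A nontrivial
element fixing two points `x ≠ y` generates the stabilizer of `x`, which would then preserve the
set of blocks containing both points although it is transitive on all blocks through `x`; this
contradicts `0 < lam < k`, and the Frobenius property follows (`eq_of_fixes_two`).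

Primitivity: the size and the number of the members of a block system are both `1` modulo `p`, so a
nontrivial system forces `v ≥ (p + 1) ^ 2`, while `v - 1 ≤ lam (v - 1) = p (p - 1)`.

Since `|G| = v p` with `p` odd, it remains to exclude even `v`. Burnside's transfer theorem and the
Frattini argument show that then `v` is a power of two (`card_eq_prime_pow_of_frobenius`), and a
determinant computation shows that `p - lam = s ^ 2` is a square (`IsDesign.isSquare_of_even`).
From `lam v = (p - s) (p + s)`, where at most one factor is divisible by `4`, one gets
`v ≤ 2 (p + s)`; since `v - 1` is an odd multiple of `p` larger than `p`, also `v ≥ 3 p + 1`.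
Hence `p + 1 ≤ 2 s`, contradicting `s ^ 2 < p` (`no_two_pow_of_isSquare`).
-/

open scoped Pointwise

/-- A group action is primitive if it is transitive and every block is trivial
(this is the usual notion of a primitive permutation group). -/
def IsPrimitiveAction (G X : Type*) [Group G] [MulAction G X] : Prop :=
  MulAction.IsPretransitive G X ∧
    ∀ B : Set X, MulAction.IsBlock G B → B.Subsingleton ∨ B = Set.univ

variable {P : Type*} [Fintype P] [DecidableEq P]

/-- `𝓑` is the block set of a (non-trivial) 2-design with parameters `(v, k, lam)`
on the point set `P`. -/
structure IsDesign (𝓑 : Finset (Finset P)) (v k lam : ℕ) : Prop where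
  card_points : Fintype.card P = v
  blocks_card : ∀ B ∈ 𝓑, B.card = k
  two_lt_k : 2 < k
  k_lt_v : k < v - 1
  lam_pos : 0 < lam
  pair_blocks : ∀ x y : P, x ≠ y → (𝓑.filter fun B => x ∈ B ∧ y ∈ B).card = lam

/-- `G` is an automorphism group of the design with block set `𝓑`:
every element of `G` maps blocks to blocks. -/
def IsAutGroup (G : Subgroup (Equiv.Perm P)) (𝓑 : Finset (Finset P)) : Prop :=
  ∀ g ∈ G, ∀ B ∈ 𝓑, g • B ∈ 𝓑

/-- `G` acts transitively on the flags of the design with block set `𝓑`. -/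
def IsFlagTransitive (G : Subgroup (Equiv.Perm P)) (𝓑 : Finset (Finset P)) : Prop :=
  ∀ B₁ ∈ 𝓑, ∀ B₂ ∈ 𝓑, ∀ x₁ ∈ B₁, ∀ x₂ ∈ B₂, ∃ g ∈ G, g • x₁ = x₂ ∧ g • B₁ = B₂

/-- `G` acts transitively on the blocks of the design with block set `𝓑`. -/
def IsBlockTransitive (G : Subgroup (Equiv.Perm P)) (𝓑 : Finset (Finset P)) : Prop :=
  ∀ B₁ ∈ 𝓑, ∀ B₂ ∈ 𝓑, ∃ g ∈ G, g • B₁ = B₂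

/-! ### Counting in a symmetric design -/

theorem IsDesign.replication_eq {𝓑 : Finset (Finset P)} {v k lam : ℕ}
    (hD : IsDesign 𝓑 v k lam) (x : P) :
    (v - 1) * lam = (𝓑.filter fun B => x ∈ B).card * (k - 1) := by
  have h := Finset.card_mul_eq_card_mul (s := Finset.univ.erase x)
    (t := 𝓑.filter fun B => x ∈ B) (fun y B => y ∈ B) (m := lam) (n := k - 1)
    (by
      intro y hy
      rw [← hD.pair_blocks x y (Finset.ne_of_mem_erase hy).symm, Finset.bipartiteAbove,
        Finset.filter_filter])
    (by
      intro B hB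
      rw [Finset.mem_filter] at hB
      rw [← hD.blocks_card B hB.1, ← Finset.card_erase_of_mem hB.2]
      congr 1
      ext y
      simp [Finset.bipartiteBelow])
  rwa [Finset.card_erase_of_mem (Finset.mem_univ x), Finset.card_univ, hD.card_points] at h

/-- In a symmetric design every point lies on exactly `k` blocks. -/
theorem IsDesign.card_blocks_through {𝓑 : Finset (Finset P)} {v k lam : ℕ}
    (hD : IsDesign 𝓑 v k lam) (hsym : 𝓑.card = v) (x : P) :
    (𝓑.filter fun B => x ∈ B).card = k := by
  have h := Finset.card_mul_eq_card_mul (s := (Finset.univ : Finset P)) (t := 𝓑)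
    (fun y B => y ∈ B) (m := (𝓑.filter fun B => x ∈ B).card) (n := k)
    (by
      intro y _
      have h1 := hD.replication_eq x
      rw [hD.replication_eq y] at h1
      exact Nat.eq_of_mul_eq_mul_right (by have := hD.two_lt_k; omega) h1)
    (by
      intro B hB
      rw [← hD.blocks_card B hB]
      congr 1
      ext y
      simp [Finset.bipartiteBelow])
  rw [Finset.card_univ, hD.card_points, hsym] at h
  exact Nat.eq_of_mul_eq_mul_left (by have := hD.k_lt_v; omega) h

theorem IsDesign.lam_lt {𝓑 : Finset (Finset P)} {v k lam : ℕ}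
    (hD : IsDesign 𝓑 v k lam) (h : (v - 1) * lam = k * (k - 1)) : lam < k := by
  by_contra! hle
  have := hD.two_lt_k
  have := hD.k_lt_v
  have : k * (k - 1) < (v - 1) * lam :=
    calc k * (k - 1) ≤ k * k := Nat.mul_le_mul_left _ (by omega)
      _ < (v - 1) * k := Nat.mul_lt_mul_of_pos_right (by omega) (by omega)
      _ ≤ _ := Nat.mul_le_mul_left _ hle
  omega

/-- The even case of the Bruck-Ryser-Chowla theorem: in a symmetric design on an even number of
points the order `k - lam` is a perfect square. The incidence matrix `N` satisfies
`N * Nᵀ = (k - lam) • 1 + lam • J`, so `(det N) ^ 2 = (k - lam) ^ (v - 1) * k ^ 2` with `v - 1`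
odd. -/
theorem IsDesign.isSquare_of_even {𝓑 : Finset (Finset P)} {v k lam : ℕ}
    (hD : IsDesign 𝓑 v k lam) (hsym : 𝓑.card = v) (hv : Even v) :
    IsSquare (k - lam) := by
  have hk := hD.card_blocks_through hsym
  have hP : Nonempty P := by
    rw [← Fintype.card_pos_iff, hD.card_points]; have := hD.k_lt_v; omega
  have hrel : (v - 1) * lam = k * (k - 1) := by
    have x := hP.some
    rw [hD.replication_eq x, hk]
  have hlt := hD.lam_lt hrel
  obtain ⟨n, hn⟩ : ∃ n, k = n + lam := ⟨k - lam, by omega⟩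
  have hn0 : 0 < n := by omega
  have hnq : (n : ℚ) ≠ 0 := by positivity
  have e : P ≃ 𝓑 := Fintype.equivOfCardEq (by rw [hD.card_points, Fintype.card_coe, hsym])
  let N : Matrix P P ℚ := fun x y => if x ∈ (e y).1 then 1 else 0
  have hsum : ∀ x y : P, (N * N.transpose) x y = ((𝓑.filter fun B => x ∈ B ∧ y ∈ B).card : ℚ) := by
    intro x y
    rw [Matrix.mul_apply, Finset.card_filter, ← Finset.sum_coe_sort 𝓑, Nat.cast_sum, ← e.sum_comp]
    refine Finset.sum_congr rfl fun z _ => ?_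
    rw [Matrix.transpose_apply]
    simp only [N]
    split_ifs <;> simp_all
  have hNN : N * N.transpose = (n : ℚ) • (1 +
      Matrix.replicateCol Unit (fun _ : P => (lam / n : ℚ)) *
        Matrix.replicateRow Unit (fun _ : P => (1 : ℚ))) := by
    ext x y
    rw [hsum]
    by_cases hxy : x = y
    · subst hxy
      simp only [and_self, hk, hn]
      simp [Matrix.mul_apply]
      field_simp
    · rw [hD.pair_blocks x y hxy]
      simp [Matrix.mul_apply, hxy]
      field_simp
  obtain ⟨j, hj⟩ := hv
  obtain ⟨i, rfl⟩ : ∃ i, j = i + 1 := ⟨j - 1, by have := hD.k_lt_v; omega⟩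
  have hrelq : ((v : ℚ) - 1) * lam = k * (k - 1) := by
    have h1 : 1 ≤ v := by omega
    have h2 : 1 ≤ k := by omega
    exact_mod_cast congrArg (Nat.cast (R := ℚ)) hrel
  have hdet : N.det ^ 2 = (n : ℚ) ^ (2 * i + 1) * k ^ 2 := by
    have h := congrArg Matrix.det hNN
    rw [Matrix.det_mul, Matrix.det_transpose, Matrix.det_smul,
      Matrix.det_one_add_replicateCol_mul_replicateRow, hD.card_points] at h
    simp only [dotProduct, one_mul, Finset.sum_const, Finset.card_univ, hD.card_points,
      nsmul_eq_mul] at h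
    rw [sq, h]
    have h3 : v = (2 * i + 1) + 1 := by omega
    have h4 : (n : ℚ) = k - lam := by rw [hn]; push_cast; ring
    have h5 : (n : ℚ) * (1 + v * (lam / n)) = k ^ 2 := by
      field_simp
      rw [h4]
      linear_combination hrelq
    rw [← h5]
    nth_rw 1 [h3]
    ring
  have hsq : IsSquare (n : ℚ) := by
    refine ⟨N.det / (n ^ i * k), ?_⟩
    have : (k : ℚ) ≠ 0 := by
      have := hD.two_lt_k
      positivity
    field_simp
    rw [hdet]
    ring
  have : k - lam = n := by omega
  rw [this]
  exact Rat.isSquare_natCast_iff.mp hsq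

/-- The arithmetic obstruction: a symmetric design of prime block size `k` and square order does
not have a power of two as its number of points. -/
theorem no_two_pow_of_isSquare {v k lam e : ℕ} (hk : k.Prime) (h2 : 2 < k) (hkv : k < v - 1)
    (hlam : 0 < lam) (hlt : lam < k) (hrel : (v - 1) * lam = k * (k - 1)) (hdvd : k ∣ v - 1)
    (hsq : IsSquare (k - lam)) (hv : v = 2 ^ e) (hev : Even v) : False := by
  obtain ⟨s, hs⟩ := hsq
  obtain ⟨m, hm⟩ := hdvd
  have hkodd : Odd k := hk.odd_of_ne_two (by omega)
  have hv1 : Odd (k * m) := by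
    rw [← hm]; exact Nat.Even.sub_odd (by omega) hev odd_one
  have hmodd : Odd m := (Nat.odd_mul.mp hv1).2
  -- `m` is odd and is not `1`, so `v` is at least `3 * k + 1`.
  have hm3 : 3 ≤ m := by
    obtain ⟨a, rfl⟩ := hmodd
    rcases a with _ | a
    · simp at hm; omega
    · omega
  have hv3 : k * 3 + 1 ≤ v := by
    have := Nat.mul_le_mul_left k hm3
    omega
  have hsk : s * s < k := by omega
  have hslt : s < k := lt_of_le_of_lt (Nat.le_mul_self s) hsk
  obtain ⟨a, ha⟩ : ∃ a, k = a + s := ⟨k - s, by omega⟩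
  have hprod : lam * v = a * (a + 2 * s) := by
    obtain ⟨w, rfl⟩ : ∃ w, v = w + 1 := ⟨v - 1, by omega⟩
    obtain ⟨l, rfl⟩ : ∃ l, k = l + 1 := ⟨k - 1, by omega⟩
    simp only [Nat.add_sub_cancel] at hrel
    have h1 : l + 1 = s * s + lam := by omega
    zify at *
    linear_combination hrel - h1 + (l + 1 + a + s : ℤ) * ha
  have haeven : Even a := by
    have : Even (a * (a + 2 * s)) := hprod ▸ hev.mul_left lam
    rcases Nat.even_mul.mp this with h | h
    · exact h
    · exact (Nat.even_add.mp h).mpr (even_two_mul s)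
  obtain ⟨b, hb⟩ := haeven
  have hbig : v ≤ 2 * (k + s) := by
    have h4 : v ∣ 4 * (b * (b + s)) := ⟨lam, by rw [mul_comm v, hprod, hb]; ring⟩
    have hbs : Odd (b + (b + s)) := by
      have : b + (b + s) = k := by omega
      rwa [this]
    rcases Nat.even_or_odd b with hbe | hbo
    · have hc : Odd (b + s) := by
        rw [Nat.odd_iff] at hbs ⊢
        rw [Nat.even_iff] at hbe
        omega
      have hcop : Nat.Coprime v (b + s) := by
        rw [hv]; exact Nat.Coprime.pow_left _ hc.coprime_two_left
      have : v ∣ 4 * b := hcop.dvd_of_dvd_mul_right (by rwa [← mul_assoc] at h4)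
      have := Nat.le_of_dvd (by omega) this
      omega
    · have hcop : Nat.Coprime v b := by
        rw [hv]; exact Nat.Coprime.pow_left _ hbo.coprime_two_left
      have : v ∣ 4 * (b + s) :=
        hcop.dvd_of_dvd_mul_right (by rwa [mul_comm b, ← mul_assoc] at h4)
      have := Nat.le_of_dvd (by omega) this
      omega
  -- Now `k + 1 ≤ 2 * s`, while `s * s < k`.
  nlinarith [sq_nonneg ((s : ℤ) - 1)]

/-! ### Primitive groups whose point stabilizers have prime order -/

/-- A Frobenius-type primitive action with point stabilizers of prime order `p`, on a set whose
cardinality is prime to `p`, has prime power degree. Burnside's transfer theorem supplies a normal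
`p`-complement `K` of order `|X|`; by the Frattini argument some point stabilizer normalizes a
Sylow `q`-subgroup `Q` of `K`, so `Q` is normal by maximality of the stabilizer, hence transitive
by primitivity. -/
theorem card_eq_prime_pow_of_frobenius {G X : Type*} [Group G] [Finite G] [Fintype X]
    [MulAction G X] [MulAction.IsPreprimitive G X] [Nontrivial X]
    {p q : ℕ} (hp : p.Prime) (hq : q.Prime)
    (hstab : ∀ x : X, Nat.card (MulAction.stabilizer G x) = p)
    (hfrob : ∀ g : G, g ≠ 1 → ∀ x y : X, g • x = x → g • y = y → x = y)
    (hpX : ¬ p ∣ Fintype.card X) (hqX : q ∣ Fintype.card X) :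
    ∃ e, Fintype.card X = q ^ e := by
  classical
  have := Fact.mk hp
  have := Fact.mk hq
  obtain ⟨x⟩ : Nonempty X := inferInstance
  have hidx : (MulAction.stabilizer G x).index = Fintype.card X := by
    rw [MulAction.index_stabilizer_of_transitive, Nat.card_eq_fintype_card]
  have hpg : IsPGroup p (MulAction.stabilizer G x) :=
    IsPGroup.of_card (n := 1) (by rw [hstab, pow_one])
  let S : Sylow p G := hpg.toSylow (by rwa [hidx])
  have hS : (S : Subgroup G) = MulAction.stabilizer G x := rfl
  have hcomm : ∀ a ∈ MulAction.stabilizer G x, ∀ b ∈ MulAction.stabilizer G x, a * b = b * a := by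
    have : IsCyclic (MulAction.stabilizer G x) := isCyclic_of_prime_card (hstab x)
    intro a ha b hb
    let _ := IsCyclic.commGroup (α := MulAction.stabilizer G x)
    exact congrArg Subtype.val (mul_comm (⟨a, ha⟩ : MulAction.stabilizer G x) ⟨b, hb⟩)
  have hnorm : Subgroup.normalizer (S : Set G) ≤ Subgroup.centralizer (S : Set G) := by
    intro n hn
    -- `n` moves `x` to another fixed point of a nontrivial element of the stabilizer of `x`.
    have hnx : n ∈ MulAction.stabilizer G x := by
      have : Nontrivial (MulAction.stabilizer G x) := by
        rw [← Finite.one_lt_card_iff_nontrivial, hstab]; exact hp.one_lt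
      obtain ⟨⟨g, hg⟩, hg1⟩ := exists_ne (1 : MulAction.stabilizer G x)
      have hg' : n⁻¹ * g * n ∈ MulAction.stabilizer G x := by
        have := (Subgroup.mem_normalizer_iff''.mp hn g).mp hg
        exact this
      refine hfrob g (fun h => hg1 (Subtype.ext h)) _ _ ?_ hg
      have h2 : (n⁻¹ * g * n) • x = x := hg'
      rw [mul_smul, mul_smul, inv_smul_eq_iff] at h2
      exact h2
    rw [Subgroup.mem_centralizer_iff]
    intro h hh
    exact hcomm h hh n hnx
  obtain ⟨K, hKn, hK⟩ : ∃ K : Subgroup G, K.Normal ∧ K.IsComplement' (S : Subgroup G) :=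
    ⟨_, inferInstance, MonoidHom.ker_transferSylow_isComplement' S hnorm⟩
  have hKcard : Nat.card K = Fintype.card X := by
    rw [← hidx, ← hS]; exact hK.index_eq_card.symm
  have hKidx : K.index = p := by
    rw [hK.symm.index_eq_card, hS, hstab]
  obtain ⟨Q₀⟩ : Nonempty (Sylow q K) := inferInstance
  set Q : Subgroup G := Q₀.map K.subtype with hQ
  have hQcard : Nat.card Q = Nat.card Q₀ :=
    Subgroup.card_map_of_injective K.subtype_injective
  have hqQ : q ∣ Nat.card Q := by
    rw [hQcard]; exact Q₀.dvd_card_of_dvd_card (by rwa [hKcard])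
  obtain ⟨e, he⟩ := IsPGroup.iff_card.mp Q₀.isPGroup'
  have hsup : Subgroup.normalizer (Q : Set G) ⊔ K = ⊤ := Sylow.normalizer_sup_eq_top Q₀
  set N := Subgroup.normalizer (Q : Set G) with hN
  have hpN : p ∣ Nat.card N := by
    have h := Subgroup.relIndex_sup_right N K
    rw [hsup, Subgroup.relIndex_top_right, hKidx] at h
    rw [h]
    exact Subgroup.relIndex_dvd_card K N
  obtain ⟨⟨g, hgN⟩, hgo⟩ := exists_prime_orderOf_dvd_card' p hpN
  rw [Subgroup.orderOf_mk] at hgo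
  obtain ⟨y, hy⟩ : ∃ y : X, g • y = y := by
    refine Equiv.Perm.exists_fixed_point_of_prime (p := p) (n := 1) hpX
      (σ := MulAction.toPerm g) ?_
    rw [pow_one, ← MulAction.toPermHom_apply, ← map_pow, ← hgo, pow_orderOf_eq_one, map_one]
  have hle : MulAction.stabilizer G y ≤ N := by
    have h : Subgroup.zpowers g = MulAction.stabilizer G y :=
      Subgroup.eq_of_le_of_card_ge (Subgroup.zpowers_le.mpr hy)
        (by rw [hstab, Nat.card_zpowers, hgo])
    rw [← h]
    exact Subgroup.zpowers_le.mpr hgN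
  have hQnot : ∀ z : X, ¬ Q ≤ MulAction.stabilizer G z := by
    intro z hz
    have h1 := hqQ.trans (Subgroup.card_dvd_of_le hz)
    rw [hstab, Nat.prime_dvd_prime_iff_eq hq hp] at h1
    exact hpX (h1 ▸ hqX)
  have hNtop : N = ⊤ := by
    rcases hle.lt_or_eq with h | h
    · exact (MulAction.IsPreprimitive.isCoatom_stabilizer_of_isPreprimitive G y).2 _ h
    · exact absurd (h ▸ Subgroup.le_normalizer) (hQnot y)
  have hQn : Q.Normal := Subgroup.normalizer_eq_top_iff.mp hNtop
  have htr : MulAction.IsPretransitive Q X := by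
    apply MulAction.IsQuasiPreprimitive.isPretransitive_of_normal (G := G)
    intro h
    apply hQnot x
    intro a ha
    have : x ∈ MulAction.fixedPoints Q X := h ▸ Set.mem_univ x
    exact this ⟨a, ha⟩
  have hdvd : Fintype.card X ∣ q ^ e := by
    rw [← he, ← hQcard, ← Nat.card_eq_fintype_card,
      ← MulAction.index_stabilizer_of_transitive Q x]
    exact Subgroup.index_dvd_card _
  obtain ⟨i, -, hi⟩ := (Nat.dvd_prime_pow hq).mp hdvd
  exact ⟨i, hi⟩

/-! ### Flag-transitive symmetric designs with point stabilizers of prime order -/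

theorem isPretransitive_of_isFlagTransitive {𝓑 : Finset (Finset P)} {v k lam : ℕ}
    (hD : IsDesign 𝓑 v k lam) {G : Subgroup (Equiv.Perm P)} (hflag : IsFlagTransitive G 𝓑) :
    MulAction.IsPretransitive G P := by
  refine ⟨fun x y => ?_⟩
  by_cases hxy : x = y
  · exact ⟨1, by simpa using hxy⟩
  obtain ⟨B, hB⟩ := Finset.card_pos.mp (by rw [hD.pair_blocks x y hxy]; exact hD.lam_pos)
  rw [Finset.mem_filter] at hB
  obtain ⟨g, hg, h, -⟩ := hflag B hB.1 B hB.1 x hB.2.1 y hB.2.2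
  exact ⟨⟨g, hg⟩, h⟩

/-- The stabilizer of a point permutes the `k` blocks through it transitively, so `k` divides its
order. -/
theorem card_blocks_dvd_card_stabilizer {𝓑 : Finset (Finset P)}
    {G : Subgroup (Equiv.Perm P)} (hAut : IsAutGroup G 𝓑) (hflag : IsFlagTransitive G 𝓑) (x : P)
    (h0 : 0 < (𝓑.filter fun B => x ∈ B).card) :
    (𝓑.filter fun B => x ∈ B).card ∣ Nat.card (MulAction.stabilizer G x) := by
  obtain ⟨B, hB⟩ := Finset.card_pos.mp h0
  rw [Finset.mem_filter] at hB
  have horb : MulAction.orbit (MulAction.stabilizer G x) B =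
      ((𝓑.filter fun B => x ∈ B : Finset (Finset P)) : Set (Finset P)) := by
    ext C
    rw [Finset.mem_coe, Finset.mem_filter, MulAction.mem_orbit_iff]
    constructor
    · rintro ⟨⟨⟨g, hg⟩, hgx⟩, rfl⟩
      refine ⟨hAut g hg B hB.1, ?_⟩
      have hgx' : g • x = x := hgx
      have := Finset.smul_mem_smul_finset (a := g) hB.2
      rw [hgx'] at this
      exact this
    · rintro ⟨hC, hxC⟩
      obtain ⟨g, hg, hgx, hgB⟩ := hflag B hB.1 C hC x hB.2 x hxC
      exact ⟨⟨⟨g, hg⟩, hgx⟩, hgB⟩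
  rw [← Set.ncard_coe_finset, ← horb, ← MulAction.index_stabilizer]
  exact Subgroup.index_dvd_card _

/-- If a nontrivial element of a stabilizer of prime order fixes `x` and `y`, then the whole
stabilizer of `x` fixes `y`; being transitive on the blocks through `x`, it forces all of them to
contain `y`, that is `k = lam`. -/
theorem eq_of_fixes_two {𝓑 : Finset (Finset P)} {v k lam : ℕ}
    (hD : IsDesign 𝓑 v k lam) {G : Subgroup (Equiv.Perm P)} (hflag : IsFlagTransitive G 𝓑)
    {p : ℕ} (hp : p.Prime) (hstab : ∀ x : P, Nat.card (MulAction.stabilizer G x) = p)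
    (hk : ∀ x, (𝓑.filter fun B => x ∈ B).card = k) (hlt : lam < k)
    (g : G) (hg1 : g ≠ 1) (x y : P) (hx : g • x = x) (hy : g • y = y) : x = y := by
  by_contra hxy
  have := Fact.mk hp
  have hfix : ∀ h : G, h • x = x → h • y = y := by
    intro h hh
    obtain ⟨n, hn⟩ := mem_zpowers_of_prime_card (hstab x)
      (g := (⟨g, hx⟩ : MulAction.stabilizer G x)) (g' := ⟨h, hh⟩)
      (fun h => hg1 (congrArg Subtype.val h))
    have hn' : g ^ n = h := congrArg Subtype.val hn
    rw [← hn']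
    exact (MulAction.stabilizer G y).zpow_mem hy n
  obtain ⟨B, hB⟩ := Finset.card_pos.mp (by rw [hD.pair_blocks x y hxy]; exact hD.lam_pos)
  rw [Finset.mem_filter] at hB
  have hle : (𝓑.filter fun B => x ∈ B).card ≤ (𝓑.filter fun B => x ∈ B ∧ y ∈ B).card := by
    refine Finset.card_le_card fun C hC => ?_
    rw [Finset.mem_filter] at hC ⊢
    obtain ⟨h, hh, hhx, hhB⟩ := hflag B hB.1 C hC.1 x hB.2.1 x hC.2
    refine ⟨hC.1, hC.2, ?_⟩
    have hhy : h • y = y := hfix ⟨h, hh⟩ hhx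
    rw [← hhB, ← hhy]
    exact Finset.smul_mem_smul_finset hB.2.2
  rw [hk, hD.pair_blocks x y hxy] at hle
  omega

/-- The stabilizer of `x` acts semiregularly on the points of a block of imprimitivity other than
`x`, so the size of the block is `1` modulo the order of the stabilizer. -/
theorem ncard_isBlock_modEq_one {G X : Type*} [Group G] [MulAction G X] [Finite X]
    {p : ℕ} (hp : p.Prime) (hstab : ∀ x : X, Nat.card (MulAction.stabilizer G x) = p)
    (hfrob : ∀ g : G, g ≠ 1 → ∀ x y : X, g • x = x → g • y = y → x = y)
    {B : Set X} (hB : MulAction.IsBlock G B) {x : X} (hx : x ∈ B) :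
    B.ncard ≡ 1 [MOD p] := by
  classical
  have := Fact.mk hp
  have := Fintype.ofFinite B
  have : Nontrivial (MulAction.stabilizer G x) := by
    have : Finite (MulAction.stabilizer G x) :=
      Nat.finite_of_card_ne_zero (by rw [hstab]; exact hp.ne_zero)
    rw [← Finite.one_lt_card_iff_nontrivial, hstab]; exact hp.one_lt
  obtain ⟨⟨g, hg⟩, hg1⟩ := exists_ne (1 : MulAction.stabilizer G x)
  have hgp : g ^ p = 1 := by
    have := pow_card_eq_one' (x := (⟨g, hg⟩ : MulAction.stabilizer G x))
    rw [hstab] at this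
    exact congrArg Subtype.val this
  have hmem : ∀ h : G, h • x = x → ∀ b ∈ B, h • b ∈ B := by
    intro h hh b hb
    have : h • B = B := hB.smul_eq_of_mem hx (by rwa [hh])
    rw [← this]
    exact Set.smul_mem_smul_set hb
  let f : Function.End B := fun b => ⟨g • b.1, hmem g hg b b.2⟩
  have hpow : ∀ n : ℕ, ∀ b : B, ((f ^ n) b).1 = g ^ n • b.1 := by
    intro n
    induction n with
    | zero => intro b; rw [pow_zero, pow_zero, one_smul]; rfl
    | succ n ih =>
      intro b
      rw [pow_succ', pow_succ', mul_smul, ← ih]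
      rfl
  have hf : f ^ p ^ 1 = 1 := by
    rw [pow_one]
    funext b
    apply Subtype.ext
    rw [hpow, hgp, one_smul]
    rfl
  have h := Equiv.Perm.card_fixedPoints_modEq hf
  have hfp : Fintype.card (Function.fixedPoints f) = 1 := by
    rw [Fintype.card_eq_one_iff]
    refine ⟨⟨⟨x, hx⟩, Subtype.ext hg⟩, ?_⟩
    rintro ⟨⟨y, hy⟩, hyf⟩
    refine Subtype.ext (Subtype.ext ?_)
    exact (hfrob g (fun h => hg1 (Subtype.ext h)) x y hg (congrArg Subtype.val hyf)).symm
  rwa [hfp, ← Nat.card_eq_fintype_card] at h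

/-- A transitive Frobenius-type action with stabilizers of order `p` and fewer than `(p + 1) ^ 2`
points is primitive: the size and the number of the blocks in a nontrivial block system are both
`1` modulo `p`, hence at least `p + 1`. -/
theorem isPreprimitive_of_card_lt {G X : Type*} [Group G] [MulAction G X] [Finite X]
    [MulAction.IsPretransitive G X]
    {p : ℕ} (hp : p.Prime) (hstab : ∀ x : X, Nat.card (MulAction.stabilizer G x) = p)
    (hfrob : ∀ g : G, g ≠ 1 → ∀ x y : X, g • x = x → g • y = y → x = y)
    (hcard : Nat.card X < (p + 1) * (p + 1)) :
    MulAction.IsPreprimitive G X := by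
  refine ⟨fun {B} hB => ?_⟩
  by_contra hcon
  rw [MulAction.IsTrivialBlock, not_or, Set.not_subsingleton_iff] at hcon
  obtain ⟨hnt, huniv⟩ := hcon
  obtain ⟨x, hx⟩ := hnt.nonempty
  have hc := ncard_isBlock_modEq_one hp hstab hfrob hB hx
  have hv := ncard_isBlock_modEq_one hp hstab hfrob (MulAction.IsBlock.univ (G := G))
    (Set.mem_univ x)
  rw [Set.ncard_univ] at hv
  have hmul := hB.ncard_block_mul_ncard_orbit_eq ⟨x, hx⟩
  set d := (MulAction.orbit G B).ncard
  have hd : d ≡ 1 [MOD p] := by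
    have h1 : B.ncard * d ≡ 1 * d [MOD p] := hc.mul_right d
    rw [hmul, one_mul] at h1
    exact h1.symm.trans hv
  have hc1 : 1 < B.ncard := Set.one_lt_ncard_iff_nontrivial.mpr hnt
  have hlarge : ∀ n : ℕ, n ≡ 1 [MOD p] → 1 < n → p + 1 ≤ n := by
    intro n hn hn1
    have h := Nat.le_of_dvd (by omega) ((Nat.modEq_iff_dvd' hn1.le).mp hn.symm)
    omega
  have hd1 : 1 < d := by
    by_contra! hle
    have hXpos : 0 < Nat.card X := Nat.card_pos_iff.mpr ⟨⟨x⟩, inferInstance⟩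
    have : d = 1 := by
      rcases Nat.eq_zero_or_pos d with h | h
      · rw [h] at hmul; omega
      · omega
    rw [this, mul_one] at hmul
    exact huniv ((Set.eq_univ_iff_ncard B).mpr hmul)
  have := Nat.mul_le_mul (hlarge _ hc hc1) (hlarge _ hd hd1)
  omega

/-- **Corollary 5.4.** If `G` is a flag-transitive automorphism group of a symmetric
design whose point stabilizers have prime order `p`, then `G` is point-primitive of odd
order, and `G` is a Frobenius permutation group on the points. -/
theorem stmt_13 (𝓑 : Finset (Finset P)) (v k lam : ℕ)
    (hD : IsDesign 𝓑 v k lam) (hsym : 𝓑.card = v)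
    (G : Subgroup (Equiv.Perm P)) (hAut : IsAutGroup G 𝓑)
    (hflag : IsFlagTransitive G 𝓑)
    (p : ℕ) (hp : p.Prime)
    (hstab : ∀ x : P, Nat.card (MulAction.stabilizer G x) = p) :
    IsPrimitiveAction G P ∧ Odd (Nat.card G) ∧
    (MulAction.IsPretransitive G P ∧
      (∃ g : G, g ≠ 1 ∧ ∃ x : P, g • x = x) ∧
      (∀ g : G, g ≠ 1 → ∀ x y : P, g • x = x → g • y = y → x = y)) := by
  have hk := hD.card_blocks_through hsym
  have hlam0 := hD.lam_pos
  have hk2 := hD.two_lt_k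
  have hkv := hD.k_lt_v
  have hnt : Nontrivial P := by
    rw [← Fintype.one_lt_card_iff_nontrivial, hD.card_points]; omega
  obtain ⟨x⟩ : Nonempty P := inferInstance
  have hrel : (v - 1) * lam = k * (k - 1) := by rw [hD.replication_eq x, hk]
  have hlt := hD.lam_lt hrel
  have htr := isPretransitive_of_isFlagTransitive hD hflag
  have hkp : k = p := by
    have h := card_blocks_dvd_card_stabilizer hAut hflag x (by rw [hk]; omega)
    rw [hk, hstab] at h
    exact (hp.eq_one_or_self_of_dvd k h).resolve_left (by omega)
  subst hkp
  have hfrob := eq_of_fixes_two hD hflag hp hstab hk hlt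
  have hdvd : k ∣ v - 1 := by
    have h : k ∣ (v - 1) * lam := ⟨k - 1, hrel⟩
    exact (hp.dvd_mul.mp h).resolve_right (Nat.not_dvd_of_pos_of_lt hlam0 hlt)
  have hprim : MulAction.IsPreprimitive G P := by
    refine isPreprimitive_of_card_lt hp hstab hfrob ?_
    rw [Nat.card_eq_fintype_card, hD.card_points]
    have h1 : v - 1 ≤ (v - 1) * lam := Nat.le_mul_of_pos_right _ hlam0
    have h2 : k * (k - 1) ≤ k * k := Nat.mul_le_mul_left _ (by omega)
    have h3 : (k + 1) * (k + 1) = k * k + 2 * k + 1 := by ring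
    omega
  have hodd : Odd v := by
    rw [← Nat.not_even_iff_odd]
    intro hev
    have hndvd : ¬ k ∣ v := by
      intro h
      have := (Nat.dvd_sub h hdvd)
      have h1 : v - (v - 1) = 1 := by omega
      rw [h1, Nat.dvd_one] at this
      omega
    obtain ⟨e, he⟩ := card_eq_prime_pow_of_frobenius hp Nat.prime_two hstab hfrob
      (by rwa [hD.card_points]) (by rw [hD.card_points]; exact hev.two_dvd)
    rw [hD.card_points] at he
    exact no_two_pow_of_isSquare hp hk2 hkv hlam0 hlt hrel hdvd
      (hD.isSquare_of_even hsym hev) he hev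
  refine ⟨⟨htr, fun B hB => hB.subsingleton_or_eq_univ⟩, ?_, htr, ?_, hfrob⟩
  · rw [← (MulAction.stabilizer G x).card_mul_index, hstab,
      MulAction.index_stabilizer_of_transitive, Nat.card_eq_fintype_card, hD.card_points]
    exact (hp.odd_of_ne_two (by omega)).mul hodd
  · have : Nontrivial (MulAction.stabilizer G x) := by
      rw [← Finite.one_lt_card_iff_nontrivial, hstab]; omega
    obtain ⟨⟨g, hg⟩, hg1⟩ := exists_ne (1 : MulAction.stabilizer G x)
    exact ⟨g, fun h => hg1 (Subtype.ext h), x, hg⟩
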